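/- Let Q₈ denote the quaternion group {±1, ±i, ±j, ±k} of order 8, and let K be the subgroup of Q₈ × Q₈ × Q₈ consisting of the triples (ε₁, ε₂, ε₃) with each ε_l ∈ {1, −1} and ε₁ε₂ε₃ = 1. Set G = (Q₈ × Q₈ × Q₈)/K. Then every maximal abelian subgroup H of G is isomorphic to ℤ/2 × ℤ/2 × ℤ/4. -/

import Mathlib

/-- A subgroup is maximal abelian if it is commutative and every commutative
subgroup containing it equals it. -/
def IsMaximalAbelian {G : Type*} [Group G] (H : Subgroup G) : Prop :=
  IsMulCommutative H ∧ ∀ H' : Subgroup G, IsMulCommutative H' → H ≤ H' → H' = H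

/-!
Write `V = (𝔽₂ × 𝔽₂)³`. The quotient of `G` by its centre of order two is `V`, and two elements
of `G` commute exactly when their images are orthogonal for the nondegenerate form which is the sum
over the three coordinates of the determinant form on `𝔽₂ × 𝔽₂`. A maximal abelian subgroup `H` is
its own centralizer, so its image in `V` is its own orthogonal, hence has `8` elements, and `H`
has `16`.

An element squares to `1` exactly when its image has an even number of nonzero coordinates. An
additive code of length three with only even weights over an alphabet of four letters has at most
four words, so `H` contains an element `g` with `g ^ 2 ≠ 1`. All squares lie in the centre
`{1, g ^ 2}`; therefore `⟨g⟩`, of order four, has a complement in `H` of exponent two, which is a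
Klein four-group.
-/

open scoped IsMulCommutative

theorem IsMaximalAbelian.centralizer_eq {G : Type*} [Group G] {H : Subgroup G}
    (hH : IsMaximalAbelian H) : Subgroup.centralizer (H : Set G) = H := by
  have hle : H ≤ Subgroup.centralizer (H : Set G) :=
    Subgroup.le_centralizer_iff_isMulCommutative.mpr hH.1
  refine le_antisymm (fun g hg => ?_) hle
  have hcomm : ∀ x ∈ insert g (H : Set G), ∀ y ∈ insert g (H : Set G), x * y = y * x := by
    rintro x (rfl | hx) y (rfl | hy)
    exacts [rfl, (hg y hy).symm, hg x hx, hle hy x hx]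
  have hmem : insert g (H : Set G) ⊆ Subgroup.closure (insert g (H : Set G)) :=
    Subgroup.subset_closure
  rw [← hH.2 _ (Subgroup.isMulCommutative_closure hcomm) ((Set.subset_insert _ _).trans hmem)]
  exact hmem (Set.mem_insert _ _)

/-! ### Splitting off a cyclic subgroup -/

section Complement

variable {A : Type*} [AddCommGroup A]

theorem mem_zmultiples_nsmul_of_addOrderOf_eq_mul {g x : A} {m n : ℕ} (hn : n ≠ 0)
    (hg : addOrderOf g = m * n) (hx : x ∈ AddSubgroup.zmultiples g) (hnx : n • x = 0) :
    x ∈ AddSubgroup.zmultiples (m • g) := by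
  obtain ⟨k, rfl⟩ := hx
  have hdvd : (m * n : ℤ) ∣ k * n := by
    rw [← Nat.cast_mul, ← hg, addOrderOf_dvd_iff_zsmul_eq_zero, mul_zsmul', natCast_zsmul, hnx]
  obtain ⟨l, rfl⟩ := Int.dvd_of_mul_dvd_mul_right (by exact_mod_cast hn) hdvd
  exact ⟨l, by simp only [mul_zsmul', natCast_zsmul]⟩

variable {p : ℕ} [Fact p.Prime]

theorem exists_sup_eq_and_disjoint_of_nsmul_eq_zero {D E : AddSubgroup A} (hDE : D ≤ E)
    (hE : ∀ x ∈ E, p • x = 0) : ∃ P : AddSubgroup A, P ⊔ D = E ∧ Disjoint P D := by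
  let _ : Module (ZMod p) E := AddCommGroup.zmodModule fun x => Subtype.ext (hE x x.2)
  obtain ⟨Q, hQ⟩ := Submodule.exists_isCompl (AddSubgroup.toZModSubmodule p (D.addSubgroupOf E))
  have hP : IsCompl (D.addSubgroupOf E) Q.toAddSubgroup :=
    (AddSubgroup.toZModSubmodule p).symm.isCompl hQ
  have hD : (D.addSubgroupOf E).map E.subtype = D := AddSubgroup.map_addSubgroupOf_eq_of_le hDE
  refine ⟨Q.toAddSubgroup.map E.subtype, ?_, ?_⟩
  · rw [← hD, ← AddSubgroup.map_sup, hP.symm.sup_eq_top, ← AddMonoidHom.range_eq_map,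
      AddSubgroup.range_subtype]
  · rw [← hD, disjoint_iff, ← AddSubgroup.map_inf_eq _ _ _ E.subtype_injective,
      hP.symm.inf_eq_bot, AddSubgroup.map_bot]

theorem exists_isCompl_zmultiples {g : A} (hg : addOrderOf g = p ^ 2)
    (hA : ∀ x : A, p • x ∈ AddSubgroup.zmultiples (p • g)) :
    ∃ P : AddSubgroup A, (∀ x ∈ P, p • x = 0) ∧ IsCompl P (AddSubgroup.zmultiples g) := by
  have hp : p ≠ 0 := (Fact.out : p.Prime).ne_zero
  have hpg : AddSubgroup.zmultiples (p • g) ≤ AddSubgroup.torsionBy A p := by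
    rw [AddSubgroup.zmultiples_le, AddSubgroup.torsionBy.nsmul_iff, smul_smul, ← sq, ← hg,
      addOrderOf_nsmul_eq_zero]
  obtain ⟨P, hsup, hdisj⟩ := exists_sup_eq_and_disjoint_of_nsmul_eq_zero hpg
    fun x hx => AddSubgroup.torsionBy.nsmul_iff.mp hx
  have hP : ∀ x ∈ P, p • x = 0 := fun x hx =>
    AddSubgroup.torsionBy.nsmul_iff.mp (hsup ▸ AddSubgroup.mem_sup_left hx)
  refine ⟨P, hP, ?_, ?_⟩
  · rw [AddSubgroup.disjoint_def] at hdisj ⊢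
    exact fun {x} hxP hxg => hdisj hxP <|
      mem_zmultiples_nsmul_of_addOrderOf_eq_mul hp (hg.trans (sq p)) hxg (hP x hxP)
  · rw [codisjoint_iff, eq_top_iff]
    intro x _
    obtain ⟨k, hk⟩ := hA x
    have htors : x - k • g ∈ P ⊔ AddSubgroup.zmultiples (p • g) := by
      rw [hsup, AddSubgroup.torsionBy.nsmul_iff, nsmul_sub, ← hk, smul_comm, sub_self]
    have hle : AddSubgroup.zmultiples (p • g) ≤ AddSubgroup.zmultiples g := by
      rw [AddSubgroup.zmultiples_le]
      exact nsmul_mem (AddSubgroup.mem_zmultiples g) p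
    rw [← sub_add_cancel x (k • g)]
    exact add_mem (sup_le_sup_left hle P htors) (AddSubgroup.mem_sup_right ⟨k, rfl⟩)

end Complement

theorem isAddKleinFour_of_two_nsmul_eq_zero {A : Type*} [AddGroup A] (hcard : Nat.card A = 4)
    (hA : ∀ x : A, 2 • x = 0) : IsAddKleinFour A := by
  have : Finite A := Nat.finite_of_card_ne_zero (by lia)
  have : Nontrivial A := Finite.one_lt_card_iff_nontrivial.mp (by lia)
  exact ⟨hcard, (AddMonoid.exponent_eq_prime_iff Nat.prime_two).mpr fun x hx =>
    addOrderOf_eq_prime (hA x) hx⟩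

theorem nonempty_addEquiv_of_natCard_eq_sixteen {A : Type*} [AddCommGroup A]
    (hcard : Nat.card A = 16) {g : A} (hg : addOrderOf g = 4)
    (hA : ∀ x : A, 2 • x = 0 ∨ 2 • x = 2 • g) :
    Nonempty (A ≃+ ZMod 2 × ZMod 2 × ZMod 4) := by
  obtain ⟨P, hPtwo, hPg⟩ : ∃ P : AddSubgroup A, (∀ x ∈ P, 2 • x = 0) ∧
      IsCompl P (AddSubgroup.zmultiples g) := by
    refine exists_isCompl_zmultiples hg fun x => ?_
    rcases hA x with h | h <;> rw [h]
    exacts [zero_mem _, AddSubgroup.mem_zmultiples _]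
  have split : (P × AddSubgroup.zmultiples g) ≃+ A :=
    (Submodule.prodEquivOfIsCompl _ _ (AddSubgroup.toIntSubmodule.isCompl hPg)).toAddEquiv
  have hcyclic : Nat.card (AddSubgroup.zmultiples g) = 4 := by rw [Nat.card_zmultiples, hg]
  have cyclic : ZMod 4 ≃+ AddSubgroup.zmultiples g := hcyclic ▸ zmodAddCyclicAddEquiv inferInstance
  have hPcard : Nat.card P = 4 := by
    have h := Nat.card_congr split.toEquiv
    rw [Nat.card_prod, hcyclic, hcard] at h
    lia
  have : IsAddKleinFour P :=
    isAddKleinFour_of_two_nsmul_eq_zero hPcard fun x => Subtype.ext (hPtwo x x.2)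
  obtain ⟨klein⟩ := IsAddKleinFour.nonempty_addEquiv (G₁ := P) (G₂ := ZMod 2 × ZMod 2)
  exact ⟨(split.symm.trans (klein.prodCongr cyclic.symm)).trans AddEquiv.prodAssoc⟩

/-! ### Even codes of length three -/

section EvenCode

variable {A : Type*} [DecidableEq A]

theorem eq_zero_of_even_hammingNorm [Zero A] {x : Fin 3 → A} (hx : Even (hammingNorm x))
    {i j : Fin 3} (hij : i ≠ j) (hi : x i = 0) (hj : x j = 0) : x = 0 := by
  have hle : hammingNorm x ≤ 1 := by
    refine (Finset.card_le_card (t := {i, j}ᶜ) fun k hk => ?_).trans (by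
      rw [Finset.card_compl, Finset.card_pair hij, Fintype.card_fin])
    simp only [Finset.mem_filter_univ] at hk
    simp only [Finset.mem_compl, Finset.mem_insert, Finset.mem_singleton, not_or]
    constructor <;> rintro rfl <;> contradiction
  rw [← hammingNorm_eq_zero]
  obtain ⟨m, hm⟩ := hx
  lia

theorem exists_apply_eq_zero_of_even_hammingNorm [Zero A] {ι : Type*} [Fintype ι]
    (hι : Odd (Fintype.card ι)) {x : ι → A} (hx : Even (hammingNorm x)) : ∃ i, x i = 0 := by
  by_contra! h
  have hfull : hammingNorm x = Fintype.card ι := by simp [hammingNorm, h]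
  exact Nat.not_even_iff_odd.mpr hι (hfull ▸ hx)

variable [AddCommGroup A] {W : AddSubgroup (Fin 3 → A)}

theorem eq_of_even_hammingNorm_of_apply_eq_zero (hW : ∀ w ∈ W, Even (hammingNorm w))
    {i j : Fin 3} (hij : i ≠ j) {u v w : Fin 3 → A} (hu : u ∈ W) (hv : v ∈ W) (hw : w ∈ W)
    (hui : u i = 0) (hvi : v i = 0) (hwj : w j = 0) (hu0 : u ≠ 0) (hv0 : v ≠ 0) (hw0 : w ≠ 0) :
    u = v := by
  obtain ⟨k, hki, hk⟩ : ∃ k, k ≠ i ∧ ∀ l, l = i ∨ l = j ∨ l = k := by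
    clear hui hvi hwj
    decide +revert
  have hwi : w i ≠ 0 := fun h => hw0 (eq_zero_of_even_hammingNorm (hW w hw) hij h hwj)
  have eq_neg : ∀ x ∈ W, x i = 0 → x ≠ 0 → x k = -w k := by
    intro x hx hxi hx0
    have hxj : x j ≠ 0 := fun h => hx0 (eq_zero_of_even_hammingNorm (hW x hx) hij hxi h)
    obtain ⟨l, hl⟩ := exists_apply_eq_zero_of_even_hammingNorm (by decide)
      (hW _ (W.add_mem hx hw))
    rcases hk l with rfl | rfl | rfl
    · simp [hxi, hwi] at hl
    · simp [hwj, hxj] at hl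
    · exact eq_neg_of_add_eq_zero_left hl
  refine sub_eq_zero.mp (eq_zero_of_even_hammingNorm (hW _ (W.sub_mem hu hv)) hki.symm ?_ ?_)
  · rw [Pi.sub_apply, hui, hvi, sub_self]
  · rw [Pi.sub_apply, eq_neg u hu hui hu0, eq_neg v hv hvi hv0, sub_self]

theorem natCard_le_max_of_even_hammingNorm [Finite A] (hW : ∀ w ∈ W, Even (hammingNorm w)) :
    Nat.card W ≤ max 4 (Nat.card A) := by
  -- Either some coordinate is injective on `W`, or for each coordinate there is a nonzero word
  -- vanishing there; in the latter case these words and zero are all of `W`.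
  by_cases h : ∃ i, ∀ w ∈ W, w i = 0 → w = 0
  · obtain ⟨i, hi⟩ := h
    refine le_max_of_le_right (Nat.card_le_card_of_injective (fun w : W => w.1 i) fun v w hvw => ?_)
    exact Subtype.ext (sub_eq_zero.mp (hi _ (W.sub_mem v.2 w.2) (sub_eq_zero.mpr hvw)))
  · push Not at h
    choose u hu hui hu0 using h
    refine le_max_of_le_left ?_
    suffices Function.Surjective fun o : Option (Fin 3) => o.elim (0 : W) fun i => ⟨u i, hu i⟩ from
      (Nat.card_le_card_of_surjective _ this).trans_eq (by simp)
    rintro ⟨w, hw⟩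
    rcases eq_or_ne w 0 with rfl | hw0
    · exact ⟨none, rfl⟩
    obtain ⟨i, hi⟩ := exists_apply_eq_zero_of_even_hammingNorm (by decide) (hW w hw)
    obtain ⟨j, hij⟩ := exists_ne i
    exact ⟨some i, Subtype.ext (eq_of_even_hammingNorm_of_apply_eq_zero hW hij.symm (hu i) hw (hu j)
      (hui i) hi (hui j) (hu0 i) hw0 (hu0 j))⟩

end EvenCode

/-! ### Commutator forms -/

theorem two_mul_finrank_of_orthogonal_eq_self {K V : Type*} [Field K] [AddCommGroup V]
    [Module K V] [FiniteDimensional K V] {B : LinearMap.BilinForm K V} (hB : B.Nondegenerate)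
    {W : Submodule K V} (hW : B.orthogonal W = W) :
    2 * Module.finrank K W = Module.finrank K V := by
  have h := LinearMap.BilinForm.finrank_orthogonal hB W
  have hle := W.finrank_le
  rw [hW] at h
  lia

section CommutatorForm

variable {G V : Type*} [Group G] [AddCommGroup V] {p : ℕ} [Module (ZMod p) V]

/-- The bilinear form `B` on `V` describes commutation in `G` through the epimorphism `φ : G → V`:
two elements commute exactly when their images are orthogonal. For `G` of class two, with `φ` the
reduction modulo the centre, `B` is the form induced by the commutator. -/
structure IsCommutatorForm (φ : G →* Multiplicative V) (B : LinearMap.BilinForm (ZMod p) V) :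
    Prop where
  surjective : Function.Surjective φ
  commute_iff : ∀ g h, Commute g h ↔ B (φ g).toAdd (φ h).toAdd = 0

variable (p) in
/-- The image of a subgroup under a homomorphism to an elementary abelian `p`-group, as a subspace
over `ZMod p`. -/
def imageSubmodule (φ : G →* Multiplicative V) (H : Subgroup G) : Submodule (ZMod p) V :=
  AddSubgroup.toZModSubmodule p (Subgroup.toAddSubgroup' (H.map φ))

theorem mem_imageSubmodule {φ : G →* Multiplicative V} {H : Subgroup G} {v : V} :
    v ∈ imageSubmodule p φ H ↔ ∃ h ∈ H, (φ h).toAdd = v := Iff.rfl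

theorem natCard_imageSubmodule_mul_natCard_ker {φ : G →* Multiplicative V} {H : Subgroup G}
    (hH : φ.ker ≤ H) :
    Nat.card (imageSubmodule p φ H) * Nat.card φ.ker = Nat.card H := by
  have h : φ.ker.relIndex H = Nat.card (imageSubmodule p φ H) := Subgroup.relIndex_ker H φ
  rw [← h, ← Subgroup.relIndex_bot_left, ← Subgroup.relIndex_bot_left, mul_comm,
    Subgroup.relIndex_mul_relIndex _ _ _ bot_le hH]

variable (p) in
theorem pow_mem_ker (φ : G →* Multiplicative V) (g : G) : g ^ p ∈ φ.ker := by
  rw [MonoidHom.mem_ker, map_pow]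
  exact congrArg Multiplicative.ofAdd (ZModModule.char_nsmul_eq_zero p (φ g).toAdd)

namespace IsCommutatorForm

variable {φ : G →* Multiplicative V} {B : LinearMap.BilinForm (ZMod p) V}

theorem ker_le_center (hB : IsCommutatorForm φ B) : φ.ker ≤ Subgroup.center G := by
  intro z hz
  rw [Subgroup.mem_center_iff]
  intro g
  refine (hB.commute_iff g z).mpr ?_
  rw [MonoidHom.mem_ker.mp hz, toAdd_one, map_zero]

theorem mem_centralizer_iff (hB : IsCommutatorForm φ B) {H : Subgroup G} {g : G} :
    g ∈ Subgroup.centralizer (H : Set G) ↔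
      (φ g).toAdd ∈ B.orthogonal (imageSubmodule p φ H) := by
  simp only [Subgroup.mem_centralizer_iff, LinearMap.BilinForm.mem_orthogonal_iff,
    mem_imageSubmodule, forall_exists_index, and_imp, forall_apply_eq_imp_iff₂, ← hB.commute_iff]
  rfl

theorem imageSubmodule_centralizer (hB : IsCommutatorForm φ B) (H : Subgroup G) :
    imageSubmodule p φ (Subgroup.centralizer H) = B.orthogonal (imageSubmodule p φ H) := by
  ext v
  constructor
  · rintro ⟨c, hc, rfl⟩
    exact hB.mem_centralizer_iff.mp hc
  · intro hv
    obtain ⟨g, rfl⟩ : ∃ g, (φ g).toAdd = v := hB.surjective (Multiplicative.ofAdd v)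
    exact ⟨g, hB.mem_centralizer_iff.mpr hv, rfl⟩

theorem natCard_imageSubmodule_sq [Fact p.Prime] [FiniteDimensional (ZMod p) V]
    (hB : IsCommutatorForm φ B) (hnd : B.Nondegenerate) {H : Subgroup G}
    (hH : IsMaximalAbelian H) : Nat.card (imageSubmodule p φ H) ^ 2 = Nat.card V := by
  have hself : B.orthogonal (imageSubmodule p φ H) = imageSubmodule p φ H := by
    rw [← hB.imageSubmodule_centralizer, hH.centralizer_eq]
  rw [Module.natCard_eq_pow_finrank (K := ZMod p), Module.natCard_eq_pow_finrank (K := ZMod p)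
    (V := V), ← pow_mul, mul_comm, two_mul_finrank_of_orthogonal_eq_self hnd hself]

theorem ker_le_of_isMaximalAbelian (hB : IsCommutatorForm φ B) {H : Subgroup G}
    (hH : IsMaximalAbelian H) : φ.ker ≤ H := by
  rw [← hH.centralizer_eq]
  exact hB.ker_le_center.trans (Subgroup.center_le_centralizer _)

end IsCommutatorForm
end CommutatorForm

/-- The orthogonal direct sum of copies of `B` indexed by `ι`. -/
def piForm {R A : Type*} (ι : Type*) [Fintype ι] [CommRing R] [AddCommGroup A] [Module R A]
    (B : LinearMap.BilinForm R A) : LinearMap.BilinForm R (ι → A) :=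
  ∑ i, B.compl₁₂ (LinearMap.proj i) (LinearMap.proj i)

section PiForm

variable {R A : Type*} (ι : Type*) [Fintype ι] [CommRing R] [AddCommGroup A] [Module R A]
  (B : LinearMap.BilinForm R A)

theorem piForm_apply (x y : ι → A) : piForm ι B x y = ∑ i, B (x i) (y i) := by
  simp [piForm, LinearMap.sum_apply]

theorem piForm_single_left [DecidableEq ι] (i : ι) (a : A) (y : ι → A) :
    piForm ι B (Pi.single i a) y = B a (y i) := by
  rw [piForm_apply, Fintype.sum_eq_single i fun j hj => by simp [hj], Pi.single_eq_same]

theorem piForm_single_right [DecidableEq ι] (i : ι) (a : A) (x : ι → A) :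
    piForm ι B x (Pi.single i a) = B (x i) a := by
  rw [piForm_apply, Fintype.sum_eq_single i fun j hj => by simp [hj], Pi.single_eq_same]

variable {B} in
theorem nondegenerate_piForm (hB : B.Nondegenerate) : (piForm ι B).Nondegenerate := by
  classical
  constructor
  · intro x hx
    funext i
    exact hB.1 _ fun a => by rw [← piForm_single_right, hx]
  · intro y hy
    funext i
    exact hB.2 _ fun a => by rw [← piForm_single_left, hy]

end PiForm

section AreaForm

variable (R : Type*) [CommRing R]

/-- The determinant of a pair of vectors in `R × R`, as an alternating bilinear form. -/
def areaForm : LinearMap.BilinForm R (R × R) :=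
  (LinearMap.mul R R).compl₁₂ (LinearMap.fst R R R) (LinearMap.snd R R R) -
    (LinearMap.mul R R).compl₁₂ (LinearMap.snd R R R) (LinearMap.fst R R R)

theorem areaForm_apply (x y : R × R) : areaForm R x y = x.1 * y.2 - x.2 * y.1 := rfl

theorem nondegenerate_areaForm : (areaForm R).Nondegenerate := by
  constructor <;> intro x hx <;> have h₁ := hx (1, 0) <;> have h₂ := hx (0, 1) <;>
    simp only [areaForm_apply] at h₁ h₂ <;> ext <;> simp_all

end AreaForm

theorem sq_eq_one_or_sq_eq_of_natCard_ker_eq_two {G V : Type*} [Group G] [AddCommGroup V]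
    [Module (ZMod 2) V] {φ : G →* Multiplicative V} (hker : Nat.card φ.ker = 2) {g : G}
    (hg : g ^ 2 ≠ 1) (x : G) : x ^ 2 = 1 ∨ x ^ 2 = g ^ 2 := by
  obtain ⟨z, -, hz⟩ := (Nat.card_eq_two_iff' (1 : φ.ker)).mp hker
  have eq_z {y : G} (hy : y ^ 2 ≠ 1) : y ^ 2 = z :=
    congrArg Subtype.val (hz ⟨y ^ 2, pow_mem_ker 2 φ y⟩ fun h => hy (congrArg Subtype.val h))
  exact or_iff_not_imp_left.mpr fun hx => (eq_z hx).trans (eq_z hg).symm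

theorem nonempty_mulEquiv_of_isMaximalAbelian {G A : Type*} [Group G] [AddCommGroup A]
    [DecidableEq A] [Module (ZMod 2) A] {φ : G →* Multiplicative (Fin 3 → A)}
    {B : LinearMap.BilinForm (ZMod 2) (Fin 3 → A)}
    (hB : IsCommutatorForm φ B) (hnd : B.Nondegenerate) (hA : Nat.card A = 4)
    (hker : Nat.card φ.ker = 2) (hsq : ∀ g, g ^ 2 = 1 ↔ Even (hammingNorm (φ g).toAdd))
    {H : Subgroup G} (hH : IsMaximalAbelian H) :
    Nonempty (H ≃* Multiplicative (ZMod 2 × ZMod 2 × ZMod 4)) := by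
  have : Finite A := Nat.finite_of_card_ne_zero (by lia)
  have hW : Nat.card (imageSubmodule 2 φ H) = 8 := by
    have h := hB.natCard_imageSubmodule_sq hnd hH
    rw [Nat.card_fun, hA, Nat.card_fin] at h
    exact Nat.pow_left_injective two_ne_zero h
  have hcard : Nat.card H = 16 := by
    rw [← natCard_imageSubmodule_mul_natCard_ker (p := 2) (hB.ker_le_of_isMaximalAbelian hH),
      hW, hker]
  obtain ⟨g, hgH, hg⟩ : ∃ g ∈ H, g ^ 2 ≠ 1 := by
    by_contra! h
    have heven : ∀ w ∈ (imageSubmodule 2 φ H).toAddSubgroup, Even (hammingNorm w) := by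
      rintro _ ⟨g, hg, rfl⟩
      exact (hsq g).mp (h g hg)
    have hle : Nat.card (imageSubmodule 2 φ H) ≤ max 4 (Nat.card A) :=
      natCard_le_max_of_even_hammingNorm heven
    rw [hW, hA] at hle
    lia
  have hg_four : g ^ 4 = 1 := by
    rw [show 4 = 2 * 2 from rfl, pow_mul, hsq, MonoidHom.mem_ker.mp (pow_mem_ker 2 φ g), toAdd_one,
      hammingNorm_zero]
    exact Even.zero
  have := hH.1
  have horder : addOrderOf (Additive.ofMul (⟨g, hgH⟩ : H)) = 4 := by
    rw [addOrderOf_ofMul_eq_orderOf, Subgroup.orderOf_mk]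
    exact orderOf_eq_prime_pow (p := 2) (n := 1) hg hg_four
  obtain ⟨e⟩ := nonempty_addEquiv_of_natCard_eq_sixteen (A := Additive H) hcard horder fun x =>
    (sq_eq_one_or_sq_eq_of_natCard_ker_eq_two hker hg x.toMul).imp Subtype.ext Subtype.ext
  exact ⟨AddEquiv.toMultiplicativeRight e⟩

/-! ### Central powers of the quaternion group -/

/-- The central element `(-1) ^ e` of the quaternion group `Q₈`, where `-1` is `a 2`. -/
def quaternionSign (e : ZMod 2) : QuaternionGroup 2 :=
  QuaternionGroup.a (2 * e.val)

theorem quaternionSign_injective : Function.Injective quaternionSign := by decide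

theorem quaternionSign_zero : quaternionSign 0 = 1 := rfl

theorem quaternionSign_add : ∀ e f : ZMod 2,
    quaternionSign (e + f) = quaternionSign e * quaternionSign f := by decide

theorem quaternionSign_neg : ∀ e : ZMod 2,
    quaternionSign (-e) = (quaternionSign e)⁻¹ := by decide

theorem commute_quaternionSign : ∀ (x : QuaternionGroup 2) (e : ZMod 2),
    Commute x (quaternionSign e) := by
  unfold Commute SemiconjBy; decide

theorem exists_quaternionSign_eq_iff : ∀ {x : QuaternionGroup 2},
    (∃ e, quaternionSign e = x) ↔ x = 1 ∨ x = QuaternionGroup.a 2 := by decide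

/-- The reduction of `Q₈` modulo its centre `{1, -1}`, with `a 1` and `xa 0` sent to the standard
basis of the Klein four-group. -/
def quaternionModCenter : QuaternionGroup 2 →* Multiplicative (ZMod 2 × ZMod 2) where
  toFun
    | .a i => .ofAdd (i.val, 0)
    | .xa i => .ofAdd (i.val, 1)
  map_one' := rfl
  map_mul' := by decide

theorem quaternionModCenter_surjective : Function.Surjective quaternionModCenter := by decide

theorem quaternionModCenter_eq_one_iff : ∀ {x : QuaternionGroup 2},
    quaternionModCenter x = 1 ↔ ∃ e, quaternionSign e = x := by decide

theorem inv_mul_mul_eq_quaternionSign : ∀ x y : QuaternionGroup 2,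
    (y * x)⁻¹ * (x * y) = quaternionSign
      (areaForm (ZMod 2) (quaternionModCenter x).toAdd (quaternionModCenter y).toAdd) := by
  simp only [areaForm_apply]; decide

theorem sq_eq_quaternionSign : ∀ x : QuaternionGroup 2,
    x ^ 2 = quaternionSign (if (quaternionModCenter x).toAdd ≠ 0 then 1 else 0) := by decide

section CentralPower

variable (ι : Type*) [Fintype ι]

/-- The sign vectors with product `1` in a power of `Q₈`. A sign vector is `quaternionSign ∘ e`, and
its product is `1` when the exponents `e` sum to zero in `ZMod 2`. -/
def signKernel : Subgroup (ι → QuaternionGroup 2) where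
  carrier := {t | ∃ e : ι → ZMod 2, ∑ i, e i = 0 ∧ quaternionSign ∘ e = t}
  one_mem' := ⟨0, Fintype.sum_eq_zero _ fun _ => rfl, rfl⟩
  mul_mem' := by
    rintro _ _ ⟨e, he, rfl⟩ ⟨f, hf, rfl⟩
    refine ⟨e + f, ?_, funext fun i => quaternionSign_add (e i) (f i)⟩
    simp only [Pi.add_apply, Finset.sum_add_distrib, he, hf, add_zero]
  inv_mem' := by
    rintro _ ⟨e, he, rfl⟩
    refine ⟨-e, ?_, funext fun i => quaternionSign_neg (e i)⟩
    simp only [Pi.neg_apply, Finset.sum_neg_distrib, he, neg_zero]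

variable {ι} in
theorem quaternionSign_comp_mem_signKernel {e : ι → ZMod 2} :
    quaternionSign ∘ e ∈ signKernel ι ↔ ∑ i, e i = 0 := by
  refine ⟨?_, fun h => ⟨e, h, rfl⟩⟩
  rintro ⟨f, hf, hfe⟩
  rwa [quaternionSign_injective.comp_left hfe] at hf

instance : (signKernel ι).Normal where
  conj_mem := by
    rintro _ ⟨e, he, rfl⟩ x
    have hx : Commute x (quaternionSign ∘ e) :=
      funext fun i => commute_quaternionSign (x i) (e i)
    rw [hx.eq, mul_inv_cancel_right]
    exact quaternionSign_comp_mem_signKernel.mpr he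

/-- The central product of copies of `Q₈` indexed by `ι`: the power of `Q₈` with the centres of all
factors identified. -/
abbrev QuaternionCentralPower : Type _ := (ι → QuaternionGroup 2) ⧸ signKernel ι

namespace QuaternionCentralPower

/-- The coordinatewise reduction of the central power modulo its centre. -/
def toVector : QuaternionCentralPower ι →* Multiplicative (ι → ZMod 2 × ZMod 2) :=
  QuotientGroup.lift (signKernel ι)
    { toFun x := .ofAdd fun i => (quaternionModCenter (x i)).toAdd
      map_one' := rfl
      map_mul' x y := congrArg Multiplicative.ofAdd <| funext fun i => by
        rw [Pi.mul_apply, map_mul]; rfl }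
    (by
      rintro _ ⟨e, -, rfl⟩
      exact congrArg Multiplicative.ofAdd <| funext fun i =>
        quaternionModCenter_eq_one_iff.mpr ⟨e i, rfl⟩)

variable {ι}

theorem isCommutatorForm_toVector :
    IsCommutatorForm (toVector ι) (piForm ι (areaForm (ZMod 2))) where
  surjective v := by
    choose x hx using fun i => quaternionModCenter_surjective (.ofAdd (v.toAdd i))
    exact ⟨(x : QuaternionCentralPower ι), funext hx⟩
  commute_iff g h := by
    induction g using QuotientGroup.induction_on with | H x =>
    induction h using QuotientGroup.induction_on with | H y =>
    have hcomm : (y * x)⁻¹ * (x * y) = quaternionSign ∘ fun i =>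
        areaForm (ZMod 2) (quaternionModCenter (x i)).toAdd (quaternionModCenter (y i)).toAdd :=
      funext fun i => inv_mul_mul_eq_quaternionSign (x i) (y i)
    rw [commute_iff_eq, eq_comm, ← QuotientGroup.mk_mul, ← QuotientGroup.mk_mul, QuotientGroup.eq,
      hcomm, quaternionSign_comp_mem_signKernel, piForm_apply]
    rfl

theorem sq_eq_one_iff {g : QuaternionCentralPower ι} :
    g ^ 2 = 1 ↔ Even (hammingNorm (toVector ι g).toAdd) := by
  induction g using QuotientGroup.induction_on with | H x =>
  have hsq : x ^ 2 = quaternionSign ∘ fun i =>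
      if (quaternionModCenter (x i)).toAdd ≠ 0 then 1 else 0 :=
    funext fun i => sq_eq_quaternionSign (x i)
  rw [← QuotientGroup.mk_pow, QuotientGroup.eq_one_iff, hsq, quaternionSign_comp_mem_signKernel,
    ← ZMod.natCast_eq_zero_iff_even, hammingNorm, Finset.natCast_card_filter]
  rfl

theorem mem_ker_toVector_iff {g : QuaternionCentralPower ι} :
    g ∈ (toVector ι).ker ↔
      ∃ e : ι → ZMod 2, ((quaternionSign ∘ e :) : QuaternionCentralPower ι) = g := by
  constructor
  · induction g using QuotientGroup.induction_on with | H x =>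
    intro hx
    choose e he using fun i => quaternionModCenter_eq_one_iff.mp (congrFun hx i)
    exact ⟨e, congrArg _ (funext he)⟩
  · rintro ⟨e, rfl⟩
    exact funext fun i => quaternionModCenter_eq_one_iff.mpr ⟨e i, rfl⟩

theorem mk_quaternionSign_comp_eq_iff {e f : ι → ZMod 2} :
    ((quaternionSign ∘ e :) : QuaternionCentralPower ι) = (quaternionSign ∘ f :) ↔
      ∑ i, e i = ∑ i, f i := by
  have hdiv : (quaternionSign ∘ e)⁻¹ * (quaternionSign ∘ f) = quaternionSign ∘ (-e + f) :=
    funext fun i => by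
      simp only [Pi.mul_apply, Pi.inv_apply, Function.comp_apply, Pi.add_apply, Pi.neg_apply,
        quaternionSign_add, quaternionSign_neg]
  rw [QuotientGroup.eq, hdiv, quaternionSign_comp_mem_signKernel]
  simp only [Pi.add_apply, Pi.neg_apply, Finset.sum_add_distrib, Finset.sum_neg_distrib,
    neg_add_eq_zero]

theorem natCard_ker_toVector [Nonempty ι] : Nat.card (toVector ι).ker = 2 := by
  classical
  obtain ⟨i⟩ := ‹Nonempty ι›
  let f (c : ZMod 2) : (toVector ι).ker :=
    ⟨(quaternionSign ∘ Pi.single i c :), mem_ker_toVector_iff.mpr ⟨_, rfl⟩⟩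
  have hf : Function.Bijective f := by
    constructor
    · intro c d hcd
      have h := mk_quaternionSign_comp_eq_iff.mp (congrArg Subtype.val hcd)
      rwa [Fintype.sum_pi_single', Fintype.sum_pi_single'] at h
    · rintro ⟨g, hg⟩
      obtain ⟨e, rfl⟩ := mem_ker_toVector_iff.mp hg
      refine ⟨∑ j, e j, Subtype.ext (mk_quaternionSign_comp_eq_iff.mpr ?_)⟩
      rw [Fintype.sum_pi_single']
  rw [← Nat.card_eq_of_bijective f hf, Nat.card_zmod]

end QuaternionCentralPower

end CentralPower

theorem mem_signKernel_fin_three {t : Fin 3 → QuaternionGroup 2} :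
    t ∈ signKernel (Fin 3) ↔
      (∀ l, t l = 1 ∨ t l = QuaternionGroup.a 2) ∧ t 0 * t 1 * t 2 = 1 := by
  have hprod (e : Fin 3 → ZMod 2) :
      quaternionSign (e 0) * quaternionSign (e 1) * quaternionSign (e 2) = 1 ↔ ∑ i, e i = 0 := by
    rw [← quaternionSign_add, ← quaternionSign_add, ← Fin.sum_univ_three, ← quaternionSign_zero,
      quaternionSign_injective.eq_iff]
  constructor
  · rintro ⟨e, he, rfl⟩
    exact ⟨fun l => exists_quaternionSign_eq_iff.mp ⟨e l, rfl⟩, (hprod e).mpr he⟩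
  · rintro ⟨hsign, ht⟩
    choose e he using fun l => exists_quaternionSign_eq_iff.mpr (hsign l)
    obtain rfl : quaternionSign ∘ e = t := funext he
    exact ⟨e, (hprod e).mp ht, rfl⟩

/-- every maximal abelian subgroup of `(Q₈ × Q₈ × Q₈)/K` is isomorphic
to `ℤ/2 × ℤ/2 × ℤ/4`.  Here `Q₈ = QuaternionGroup 2`, `-1 = QuaternionGroup.a 2`,
and `K = {(ε₁,ε₂,ε₃) : εₗ = ±1, ε₁ε₂ε₃ = 1}`. -/
theorem stmt_2 (K : Subgroup (Fin 3 → QuaternionGroup 2)) [K.Normal]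
    (hK : ∀ t, t ∈ K ↔
      ((∀ l, t l = 1 ∨ t l = QuaternionGroup.a 2) ∧ t 0 * t 1 * t 2 = 1))
    (H : Subgroup ((Fin 3 → QuaternionGroup 2) ⧸ K))
    (hH : IsMaximalAbelian H) :
    Nonempty (H ≃* Multiplicative (ZMod 2 × ZMod 2 × ZMod 4)) := by
  obtain rfl : K = signKernel (Fin 3) :=
    Subgroup.ext fun t => (hK t).trans mem_signKernel_fin_three.symm
  exact nonempty_mulEquiv_of_isMaximalAbelian QuaternionCentralPower.isCommutatorForm_toVector
    (nondegenerate_piForm _ (nondegenerate_areaForm _)) (by simp)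
    QuaternionCentralPower.natCard_ker_toVector (fun _ => QuaternionCentralPower.sq_eq_one_iff) hH
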